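/- Let t₀ < t_s, let B > 0, β > 1 and k ∈ ℝ, and let a, μ : (t₀,t_s) → ℝ be differentiable with a(t) > 0 and μ(t) > 0, satisfying the continuity equation μ′ = 3(a′/a)·B·μ^β (fluid with equation of state p + μ = −Bμ^β) and the Friedmann equation (a′/a)² = μ/3 − k/a². Then μ(t) → ∞ as t → t_s⁻ if and only if, as t → t_s⁻: a(t) tends to a finite positive limit, |a′(t)/a(t)| → ∞, |E|(t) = |2μ + 3Bμ^β|/(2√3) → ∞ and |D|(t) = μ/√3 → ∞ (sudden-rip singularity of type (S₂,N₂,B₁)). -/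

import Mathlib

open Filter Topology Set

/-!
Dividing the continuity equation `μ′ = 3BHμ^β` by `μ^β` gives
`(μ^(1-β) / (1-β))′ = 3B (log a)′`, so `log a` differs from `μ^(1-β) / (3B(1-β))` by a constant.
Since `β > 1`, this power of `μ` vanishes as `μ → ∞`, so `a` converges to a positive limit and the
curvature term `k / a²` stays bounded: the Friedmann equation then forces `H² ∼ μ / 3`. In `|E|`
the term `μ^β` dominates `μ`, whatever the sign of `B`. Conversely, `|D|` is a multiple of `μ`.
-/

section FirstIntegral

theorem hasDerivAt_rpow_one_sub_div {f : ℝ → ℝ} {f' t β : ℝ} (hf : HasDerivAt f f' t)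
    (hpos : 0 < f t) (hβ : β ≠ 1) :
    HasDerivAt (fun s => f s ^ (1 - β) / (1 - β)) (f' / f t ^ β) t := by
  have hexp : 1 - β ≠ 0 := sub_ne_zero.mpr hβ.symm
  refine ((hf.rpow_const (p := 1 - β) (Or.inl hpos.ne')).div_const (1 - β)).congr_deriv ?_
  rw [show 1 - β - 1 = -β by ring, Real.rpow_neg hpos.le]
  field_simp

variable {a μ : ℝ → ℝ} {c β : ℝ}

theorem exists_log_eq_rpow_one_sub_add_const {s : Set ℝ} (hs : IsOpen s) (hs' : IsPreconnected s)
    (hc : c ≠ 0) (hβ : β ≠ 1)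
    (ha : ∀ t ∈ s, DifferentiableAt ℝ a t) (hμ : ∀ t ∈ s, DifferentiableAt ℝ μ t)
    (ha₀ : ∀ t ∈ s, a t ≠ 0) (hμpos : ∀ t ∈ s, 0 < μ t)
    (hcont : ∀ t ∈ s, deriv μ t = c * (deriv a t / a t) * μ t ^ β) :
    ∃ C, ∀ t ∈ s, Real.log (a t) = μ t ^ (1 - β) / (1 - β) / c + C := by
  have hlog : ∀ t ∈ s, HasDerivAt (fun t => Real.log (a t)) (deriv a t / a t) t :=
    fun t ht => (ha t ht).hasDerivAt.log (ha₀ t ht)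
  have hpow : ∀ t ∈ s,
      HasDerivAt (fun t => μ t ^ (1 - β) / (1 - β) / c) (deriv a t / a t) t := by
    intro t ht
    have hμβ : μ t ^ β ≠ 0 := (Real.rpow_pos_of_pos (hμpos t ht) β).ne'
    refine ((hasDerivAt_rpow_one_sub_div (hμ t ht).hasDerivAt (hμpos t ht) hβ).div_const
      c).congr_deriv ?_
    rw [hcont t ht, mul_div_cancel_right₀ _ hμβ, mul_div_cancel_left₀ _ hc]
  exact hs.exists_eq_add_of_deriv_eq hs'
    (fun t ht => (hlog t ht).differentiableAt.differentiableWithinAt)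
    (fun t ht => (hpow t ht).differentiableAt.differentiableWithinAt)
    (fun t ht => (hlog t ht).deriv.trans (hpow t ht).deriv.symm)

theorem exists_tendsto_scaleFactor_of_tendsto_density_atTop {t_s : ℝ} (hc : c ≠ 0) (hβ : 1 < β)
    (ha : ∀ᶠ t in 𝓝[<] t_s, DifferentiableAt ℝ a t)
    (hμ : ∀ᶠ t in 𝓝[<] t_s, DifferentiableAt ℝ μ t)
    (hapos : ∀ᶠ t in 𝓝[<] t_s, 0 < a t)
    (hcont : ∀ᶠ t in 𝓝[<] t_s, deriv μ t = c * (deriv a t / a t) * μ t ^ β)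
    (hlim : Tendsto μ (𝓝[<] t_s) atTop) :
    ∃ a_s, 0 < a_s ∧ Tendsto a (𝓝[<] t_s) (𝓝 a_s) := by
  obtain ⟨t₁, ht₁, hI⟩ := mem_nhdsLT_iff_exists_Ioo_subset.mp
    (ha.and (hμ.and (hapos.and (hcont.and (hlim.eventually_gt_atTop 0)))))
  obtain ⟨C, hC⟩ := exists_log_eq_rpow_one_sub_add_const isOpen_Ioo isPreconnected_Ioo hc hβ.ne'
    (fun t ht => (hI ht).1) (fun t ht => (hI ht).2.1) (fun t ht => (hI ht).2.2.1.ne')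
    (fun t ht => (hI ht).2.2.2.2) (fun t ht => (hI ht).2.2.2.1)
  have hpow : Tendsto (fun t => μ t ^ (1 - β)) (𝓝[<] t_s) (𝓝 0) := by
    simpa only [neg_sub, Function.comp_def] using
      (tendsto_rpow_neg_atTop (sub_pos.mpr hβ)).comp hlim
  have hlog : Tendsto (fun t => μ t ^ (1 - β) / (1 - β) / c + C) (𝓝[<] t_s) (𝓝 C) := by
    simpa only [zero_div, zero_add] using ((hpow.div_const (1 - β)).div_const c).add_const C
  refine ⟨Real.exp C, Real.exp_pos C, hlog.rexp.congr' ?_⟩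
  filter_upwards [Ioo_mem_nhdsLT ht₁, hapos] with t ht hat
  rw [← hC t ht, Real.exp_log hat]

end FirstIntegral

section Blowup

theorem tendsto_abs_atTop_of_tendsto_sq_atTop {ι : Type*} {l : Filter ι} {f : ι → ℝ}
    (hf : Tendsto (fun i => f i ^ 2) l atTop) : Tendsto (fun i => |f i|) l atTop := by
  simpa only [Function.comp_def, Real.sqrt_sq_eq_abs] using Real.tendsto_sqrt_atTop.comp hf

theorem tendsto_abs_hubble_atTop_of_friedmann {ι : Type*} {l : Filter ι} {H μ a : ι → ℝ}
    {k a_s : ℝ} (hFried : ∀ᶠ i in l, H i ^ 2 = μ i / 3 - k / a i ^ 2) (ha_s : a_s ≠ 0)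
    (ha : Tendsto a l (𝓝 a_s)) (hμ : Tendsto μ l atTop) :
    Tendsto (fun i => |H i|) l atTop := by
  have hcurv : Tendsto (fun i => -(k / a i ^ 2)) l (𝓝 (-(k / a_s ^ 2))) :=
    (tendsto_const_nhds.div (ha.pow 2) (pow_ne_zero 2 ha_s)).neg
  have hsum : Tendsto (fun i => μ i / 3 - k / a i ^ 2) l atTop := by
    simpa only [sub_eq_add_neg] using (hμ.atTop_div_const three_pos).atTop_add hcurv
  exact tendsto_abs_atTop_of_tendsto_sq_atTop (hsum.congr' (hFried.mono fun _ h => h.symm))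

theorem tendsto_abs_mul_add_mul_rpow_atTop {β c : ℝ} (b : ℝ) (hc : c ≠ 0) (hβ : 1 < β) :
    Tendsto (fun x : ℝ => |b * x + c * x ^ β|) atTop atTop := by
  have hfactor : Tendsto (fun x : ℝ => |b * x ^ (1 - β) + c|) atTop (𝓝 |c|) := by
    simpa only [neg_sub, mul_zero, zero_add] using
      (((tendsto_rpow_neg_atTop (sub_pos.mpr hβ)).const_mul b).add_const c).abs
  refine ((tendsto_rpow_atTop (zero_lt_one.trans hβ)).atTop_mul_pos
    (abs_pos.mpr hc) hfactor).congr' ?_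
  filter_upwards [eventually_gt_atTop 0] with x hx
  have hsplit : x ^ β * x ^ (1 - β) = x := by
    rw [← Real.rpow_add hx, add_sub_cancel, Real.rpow_one]
  calc x ^ β * |b * x ^ (1 - β) + c|
      = |x ^ β * (b * x ^ (1 - β) + c)| := by
        rw [abs_mul, abs_of_pos (Real.rpow_pos_of_pos hx β)]
    _ = |b * x + c * x ^ β| := by
        congr 1
        linear_combination b * hsplit

end Blowup

theorem sudden_rip_singularity_general {t_s B β k : ℝ} (hB : B ≠ 0) (hβ : 1 < β) {a μ : ℝ → ℝ}
    (ha : ∀ᶠ t in 𝓝[<] t_s, DifferentiableAt ℝ a t)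
    (hμ : ∀ᶠ t in 𝓝[<] t_s, DifferentiableAt ℝ μ t)
    (hapos : ∀ᶠ t in 𝓝[<] t_s, 0 < a t)
    (hcont : ∀ᶠ t in 𝓝[<] t_s, deriv μ t = 3 * (deriv a t / a t) * B * μ t ^ β)
    (hFried : ∀ᶠ t in 𝓝[<] t_s, (deriv a t / a t) ^ 2 = μ t / 3 - k / (a t) ^ 2) :
    Tendsto μ (𝓝[<] t_s) atTop ↔
      ((∃ a_s : ℝ, 0 < a_s ∧ Tendsto a (𝓝[<] t_s) (𝓝 a_s)) ∧
       Tendsto (fun t => |deriv a t / a t|) (𝓝[<] t_s) atTop ∧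
       Tendsto (fun t => |2 * μ t + 3 * B * μ t ^ β| / (2 * Real.sqrt 3))
         (𝓝[<] t_s) atTop ∧
       Tendsto (fun t => μ t / Real.sqrt 3) (𝓝[<] t_s) atTop) := by
  have h3B : 3 * B ≠ 0 := mul_ne_zero three_ne_zero hB
  have hD : Tendsto (fun t => μ t / Real.sqrt 3) (𝓝[<] t_s) atTop ↔
      Tendsto μ (𝓝[<] t_s) atTop := tendsto_div_const_atTop_of_pos (by positivity)
  refine ⟨fun hlim => ?_, fun h => hD.mp h.2.2.2⟩
  obtain ⟨a_s, ha_s, halim⟩ := exists_tendsto_scaleFactor_of_tendsto_density_atTop h3B hβ ha hμ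
    hapos (hcont.mono fun t h => h.trans (by ring)) hlim
  exact ⟨⟨a_s, ha_s, halim⟩,
    tendsto_abs_hubble_atTop_of_friedmann hFried ha_s.ne' halim hlim,
    ((tendsto_abs_mul_add_mul_rpow_atTop 2 h3B hβ).comp hlim).atTop_div_const (by positivity),
    hD.mpr hlim⟩

/-- In an FRW universe filled with a fluid with equation of state
`p + μ = −Bμ^β` with `β > 1` (so `μ′ = 3H·Bμ^β`, `H² = μ/3 − k/a²` on
`(t₀,t_s)`), `μ → ∞` as `t → t_s⁻` iff, as `t → t_s⁻`: `a` tends to a finite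
positive limit, `|H| → ∞`, `|E| = |2μ + 3Bμ^β|/(2√3) → ∞` and
`|D| = μ/√3 → ∞` (sudden-rip singularity of type `(S₂,N₂,B₁)`). -/
theorem sudden_rip_singularity
    (t₀ t_s B β k : ℝ) (hlt : t₀ < t_s) (hB : 0 < B) (hβ : 1 < β)
    (a μ : ℝ → ℝ)
    (ha : ∀ t ∈ Set.Ioo t₀ t_s, DifferentiableAt ℝ a t)
    (hμ : ∀ t ∈ Set.Ioo t₀ t_s, DifferentiableAt ℝ μ t)
    (hapos : ∀ t ∈ Set.Ioo t₀ t_s, 0 < a t)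
    (hμpos : ∀ t ∈ Set.Ioo t₀ t_s, 0 < μ t)
    (hcont : ∀ t ∈ Set.Ioo t₀ t_s,
      deriv μ t = 3 * (deriv a t / a t) * B * μ t ^ β)
    (hFried : ∀ t ∈ Set.Ioo t₀ t_s,
      (deriv a t / a t) ^ 2 = μ t / 3 - k / (a t) ^ 2) :
    Tendsto μ (𝓝[<] t_s) atTop ↔
      ((∃ a_s : ℝ, 0 < a_s ∧ Tendsto a (𝓝[<] t_s) (𝓝 a_s)) ∧
       Tendsto (fun t => |deriv a t / a t|) (𝓝[<] t_s) atTop ∧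
       Tendsto (fun t => |2 * μ t + 3 * B * μ t ^ β| / (2 * Real.sqrt 3))
         (𝓝[<] t_s) atTop ∧
       Tendsto (fun t => μ t / Real.sqrt 3) (𝓝[<] t_s) atTop) := by
  have hev {p : ℝ → Prop} : (∀ t ∈ Set.Ioo t₀ t_s, p t) → ∀ᶠ t in 𝓝[<] t_s, p t :=
    eventually_of_mem (Ioo_mem_nhdsLT hlt)
  exact sudden_rip_singularity_general hB.ne' hβ (hev ha) (hev hμ) (hev hapos) (hev hcont)
    (hev hFried)
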